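/- For a connected graph G, the maximum number τ(G) of pairwise edge-disjoint spanning trees satisfies τ(G) ≥ ⌊λ(G)/2⌋, where λ(G) denotes the edge connectivity of G. -/

import Mathlib

open SimpleGraph

/-- Edge connectivity: the minimal number of edges whose deletion disconnects `G`. -/
noncomputable def edgeConnectivity {V : Type*} [Fintype V] (G : SimpleGraph V) : ℕ :=
  sInf {n | ∃ S : Finset (Sym2 V), S.card = n ∧ ↑S ⊆ G.edgeSet ∧
    ¬(G.deleteEdges ↑S).Connected}

/-- Tree packing number: the largest `M` such that `G` contains `M` pairwise
edge-disjoint spanning trees. -/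
noncomputable def treePackingNumber {V : Type*} [Fintype V] (G : SimpleGraph V) : ℕ :=
  sSup {M | ∃ T : Fin M → SimpleGraph V, (∀ i, T i ≤ G) ∧ (∀ i, (T i).IsTree) ∧
    Pairwise fun i j => Disjoint (T i).edgeSet (T j).edgeSet}

/-!
This is Diestel's exchange proof of the Nash-Williams–Tutte theorem. Take a family of `k` pairwise
edge-disjoint forests of `G` with as many edges as possible. An edge `uv` that no forest uses joins
two vertices of the same tree of each forest, and exchanging it for any edge of the `u`–`v` path in
that tree gives another maximum family. Let `H` consist of all edges that are left unused after some
sequence of such exchanges. Every forest, restricted to `H`, spans each component of `H`. All edges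
of `G` between different components of `H` are used, and a forest with `t` trees has only `p - t`
edges outside `H`, where `p` is the number of components of `H`. As soon as `G` has at least
`k * (p - 1)` edges between these components, every forest must therefore be a single tree.

If no fewer than `2 * k` edges disconnect `G`, then in every partition of the vertices into `p ≥ 2`
parts each part is left by at least `2 * k` edges. Each of these edges leaves two parts, so there
are at least `k * p` edges between the parts.
-/

section Forests

variable {V : Type*} {T H K : SimpleGraph V} {u v : V}

lemma reachable_le_reachable_of_adj_le (h : H.Adj ≤ K.Reachable) : H.Reachable ≤ K.Reachable := by
  rw [H.reachable_eq_reflTransGen]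
  exact Relation.reflTransGen_le_of_equivalence_of_le K.reachable_is_equivalence h

lemma connected_of_card_connectedComponent_eq_one (h : Nat.card H.ConnectedComponent = 1) :
    H.Connected := by
  obtain ⟨_, ⟨c⟩⟩ := Nat.card_eq_one_iff_unique.1 h
  exact { preconnected := fun u v => ConnectedComponent.exact (Subsingleton.elim _ _)
          nonempty := c.nonempty_supp.to_type }

lemma not_reachable_deleteEdges_of_mem_edges (hT : T.IsAcyclic) {p : T.Walk u v} (hp : p.IsPath)
    {e : Sym2 V} (he : e ∈ p.edges) : ¬(T.deleteEdges {e}).Reachable u v := by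
  classical
  induction e with | _ a b
  rw [reachable_deleteEdges_iff_exists_walk]
  rintro ⟨q, hq⟩
  have hpq : p = q.bypass := congrArg Subtype.val ((hT.subsingleton_path u v).elim ⟨p, hp⟩ q.toPath)
  exact hq (q.edges_bypass_subset_edges (hpq ▸ he))

variable [Finite V]

lemma ncard_edgeSet_sup_edge (huv : u ≠ v) (h : ¬T.Adj u v) :
    (T ⊔ edge u v).edgeSet.ncard = T.edgeSet.ncard + 1 := by
  rw [edgeSet_sup, edgeSet_edge_of_ne huv, Set.union_singleton,
    Set.ncard_insert_of_notMem (mt (mem_edgeSet _).1 h)]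

lemma sum_ncard_edgeSet_toSimpleGraph (H : SimpleGraph V) [Fintype H.ConnectedComponent] :
    ∑ c : H.ConnectedComponent, c.toSimpleGraph.edgeSet.ncard = H.edgeSet.ncard := by
  have hunion : H.edgeSet = ⋃ c : H.ConnectedComponent, c.toSimpleGraph.spanningCoe.edgeSet := by
    ext e
    induction e with | _ a b
    simp only [Set.mem_iUnion, mem_edgeSet, ConnectedComponent.adj_spanningCoe_toSimpleGraph,
      ConnectedComponent.mem_supp_iff, exists_and_right, exists_eq', true_and]
  have hdisj : Pairwise (Function.onFun Disjoint
      fun c : H.ConnectedComponent => c.toSimpleGraph.spanningCoe.edgeSet) := by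
    refine fun c d hcd => Set.disjoint_left.2 fun e hc hd => hcd ?_
    induction e with | _ a b
    rw [mem_edgeSet, ConnectedComponent.adj_spanningCoe_toSimpleGraph] at hc hd
    exact hc.1.symm.trans hd.1
  rw [hunion, Set.ncard_iUnion_of_finite (fun _ => Set.toFinite _) hdisj, finsum_eq_sum_of_fintype]
  refine Finset.sum_congr rfl fun c _ => ?_
  rw [edgeSet_map, Set.ncard_image_of_injective _ (Function.Embedding.injective _)]
  rfl

lemma ncard_edgeSet_add_card_connectedComponent (hT : T.IsAcyclic) :
    T.edgeSet.ncard + Nat.card T.ConnectedComponent = Nat.card V := by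
  have := Fintype.ofFinite T.ConnectedComponent
  have htree (c : T.ConnectedComponent) : c.toSimpleGraph.edgeSet.ncard + 1 = Nat.card c :=
    (isTree_iff_connected_and_card.1 (hT.isTree_connectedComponent c)).2
  calc T.edgeSet.ncard + Nat.card T.ConnectedComponent
      = ∑ c : T.ConnectedComponent, (c.toSimpleGraph.edgeSet.ncard + 1) := by
        simp [Finset.sum_add_distrib, sum_ncard_edgeSet_toSimpleGraph]
    _ = ∑ c : T.ConnectedComponent, Nat.card c := Finset.sum_congr rfl fun c _ => htree c
    _ = Nat.card V := by
        rw [← Nat.card_sigma]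
        exact Nat.card_congr (Equiv.sigmaFiberEquiv T.connectedComponentMk)

lemma ncard_edgeSet_sdiff_add_card_connectedComponent (hT : T.IsAcyclic)
    (h : (T ⊓ H).Reachable = H.Reachable) :
    (T.edgeSet \ H.edgeSet).ncard + Nat.card T.ConnectedComponent =
      Nat.card H.ConnectedComponent := by
  have hinf : (T.edgeSet ∩ H.edgeSet).ncard + Nat.card H.ConnectedComponent = Nat.card V := by
    have := ncard_edgeSet_add_card_connectedComponent (hT.anti (inf_le_left : T ⊓ H ≤ T))
    rwa [edgeSet_inf, ConnectedComponent, h] at this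
  have hsplit := Set.ncard_inter_add_ncard_sdiff_eq_ncard T.edgeSet H.edgeSet
  have htotal := ncard_edgeSet_add_card_connectedComponent hT
  omega

end Forests

section Packings

variable {V ι : Type*} {G : SimpleGraph V} {F F' : ι → SimpleGraph V} {u v : V}

/-- A family of pairwise edge-disjoint forests of `G`. All graphs live on the vertex set of `G`, so
that a family of edge-disjoint spanning trees is a forest packing by connected graphs. -/
structure IsForestPacking (G : SimpleGraph V) (F : ι → SimpleGraph V) : Prop where
  le : ∀ i, F i ≤ G
  isAcyclic : ∀ i, (F i).IsAcyclic
  disjoint : Pairwise fun i j => Disjoint (F i) (F j)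

/-- The edges of `G` that no member of the family `F` uses. -/
def unusedGraph (G : SimpleGraph V) (F : ι → SimpleGraph V) : SimpleGraph V :=
  G \ ⨆ i, F i

lemma unusedGraph_adj : (unusedGraph G F).Adj u v ↔ G.Adj u v ∧ ∀ i, ¬(F i).Adj u v := by
  simp [unusedGraph]

lemma IsForestPacking.update_sup_edge [DecidableEq ι] (hF : IsForestPacking G F) {i : ι}
    {T : SimpleGraph V} (hT : T ≤ F i) (huv : (unusedGraph G F).Adj u v)
    (hr : ¬T.Reachable u v) : IsForestPacking G (Function.update F i (T ⊔ edge u v)) := by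
  obtain ⟨hG, hunused⟩ := unusedGraph_adj.1 huv
  have hdisj (j : ι) (hj : j ≠ i) : Disjoint (T ⊔ edge u v) (F j) :=
    disjoint_sup_left.2 ⟨(hF.disjoint hj.symm).mono_left hT,
      ((disjoint_edge _).2 (hunused j)).symm⟩
  refine ⟨?_, ?_, fun j l hjl => ?_⟩
  · rw [Function.forall_update_iff F fun _ T => T ≤ G]
    exact ⟨sup_le (hT.trans (hF.le i)) ((edge_le_iff _).2 (.inr hG)), fun j _ => hF.le j⟩
  · rw [Function.forall_update_iff F fun _ T => T.IsAcyclic]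
    exact ⟨((hF.isAcyclic i).anti hT).sup_edge_of_not_reachable hr, fun j _ => hF.isAcyclic j⟩
  · rcases eq_or_ne j i with rfl | hj
    · simpa [hjl.symm] using hdisj l hjl.symm
    · rcases eq_or_ne l i with rfl | hl
      · simpa [hj] using (hdisj j hj).symm
      · simpa [hj, hl] using hF.disjoint hjl

variable [Fintype ι]

lemma sum_ncard_edgeSet_update [DecidableEq ι] (F : ι → SimpleGraph V) (i : ι)
    (T : SimpleGraph V) :
    ∑ j, (Function.update F i T j).edgeSet.ncard + (F i).edgeSet.ncard =
      ∑ j, (F j).edgeSet.ncard + T.edgeSet.ncard := by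
  simp_rw [Function.apply_update fun _ (T : SimpleGraph V) => T.edgeSet.ncard,
    Finset.sum_update_of_mem (Finset.mem_univ i),
    ← Finset.add_sum_erase _ (fun j => (F j).edgeSet.ncard) (Finset.mem_univ i),
    Finset.sdiff_singleton_eq_erase]
  ring

/-- A forest packing with the largest possible total number of edges among all packings of `G` by
the same number of forests. -/
structure IsMaxForestPacking (G : SimpleGraph V) (F : ι → SimpleGraph V) : Prop
    extends IsForestPacking G F where
  sum_le : ∀ F' : ι → SimpleGraph V, IsForestPacking G F' →
    ∑ i, (F' i).edgeSet.ncard ≤ ∑ i, (F i).edgeSet.ncard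

/-- The exchange step between forest packings: `F'` is a maximum packing obtained from `F` by adding
a single unused edge and deleting others. Which edges are deleted is not recorded, as the argument
only needs an upper bound on `F'`. -/
def ForestExchange (G : SimpleGraph V) (F F' : ι → SimpleGraph V) : Prop :=
  IsMaxForestPacking G F' ∧ ∃ u v, (unusedGraph G F).Adj u v ∧ ∀ i, F' i ≤ F i ⊔ edge u v

/-- The edges of `G` that are unused by some packing reachable from `F` through exchanges. Its
components are the partition witnessing that `F` cannot be enlarged. -/
def exchangeGraph (G : SimpleGraph V) (F : ι → SimpleGraph V) : SimpleGraph V :=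
  ⨆ (F') (_ : Relation.ReflTransGen (ForestExchange G) F F'), unusedGraph G F'

lemma exchangeGraph_adj : (exchangeGraph G F).Adj u v ↔
    ∃ F', Relation.ReflTransGen (ForestExchange G) F F' ∧ (unusedGraph G F').Adj u v := by
  simp [exchangeGraph]

lemma exists_isMaxForestPacking [Finite V] (ι : Type*) [Fintype ι] (G : SimpleGraph V) :
    ∃ F : ι → SimpleGraph V, IsMaxForestPacking G F := by
  obtain ⟨F, hF, hmax⟩ := Set.exists_max_image {F : ι → SimpleGraph V | IsForestPacking G F}
    (fun F => ∑ i, (F i).edgeSet.ncard) (Set.toFinite _)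
    ⟨fun _ => ⊥, fun _ => bot_le, fun _ => isAcyclic_bot, fun _ _ _ => disjoint_bot_left⟩
  exact ⟨F, hF, hmax⟩

namespace IsMaxForestPacking

lemma of_reflTransGen (hF : IsMaxForestPacking G F)
    (h : Relation.ReflTransGen (ForestExchange G) F F') : IsMaxForestPacking G F' := by
  cases h with
  | refl => exact hF
  | tail _ h => exact h.1

variable [Finite V]

lemma reachable_of_unused (hF : IsMaxForestPacking G F) (huv : (unusedGraph G F).Adj u v)
    (i : ι) : (F i).Reachable u v := by
  classical
  by_contra hr
  have hle := hF.sum_le _ (hF.update_sup_edge le_rfl huv hr)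
  have hsum := sum_ncard_edgeSet_update F i (F i ⊔ edge u v)
  rw [ncard_edgeSet_sup_edge huv.ne ((unusedGraph_adj.1 huv).2 i)] at hsum
  omega

lemma exists_forestExchange (hF : IsMaxForestPacking G F) (huv : (unusedGraph G F).Adj u v)
    {i : ι} {p : (F i).Walk u v} (hp : p.IsPath) {e : Sym2 V} (he : e ∈ p.edges) :
    ∃ F', ForestExchange G F F' ∧ e ∈ (unusedGraph G F').edgeSet := by
  classical
  let T := (F i).deleteEdges {e}
  have hei : e ∈ (F i).edgeSet := p.edges_subset_edgeSet he
  have hT : T ≤ F i := deleteEdges_le _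
  have hr : ¬T.Reachable u v := not_reachable_deleteEdges_of_mem_edges (hF.isAcyclic i) hp he
  have hncard : (T ⊔ edge u v).edgeSet.ncard = (F i).edgeSet.ncard := by
    rw [ncard_edgeSet_sup_edge huv.ne fun h => hr h.reachable, edgeSet_deleteEdges,
      Set.ncard_sdiff_singleton_add_one hei]
  have hsum := sum_ncard_edgeSet_update F i (T ⊔ edge u v)
  have hmax : IsMaxForestPacking G (Function.update F i (T ⊔ edge u v)) :=
    ⟨hF.update_sup_edge hT huv hr, fun F' hF' => (hF.sum_le F' hF').trans (by omega)⟩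
  refine ⟨_, ⟨hmax, u, v, huv, ?_⟩, ?_⟩
  · rw [Function.forall_update_iff F fun j T => T ≤ F j ⊔ edge u v]
    exact ⟨sup_le_sup_right hT _, fun j _ => le_sup_left⟩
  · induction e with | _ a b
    rw [mem_edgeSet, unusedGraph_adj, Function.forall_update_iff F fun _ T => ¬T.Adj a b]
    refine ⟨hF.le i hei, ?_, fun j hj hab => ?_⟩
    · rintro (hab | hab)
      · simp [T] at hab
      · have hi : Disjoint (F i) (edge u v) := (disjoint_edge _).2 ((unusedGraph_adj.1 huv).2 i)
        exact Set.disjoint_left.1 (disjoint_edgeSet.2 hi) hei hab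
    · exact Set.disjoint_left.1 (disjoint_edgeSet.2 (hF.disjoint hj)) hab hei

lemma reachable_inf_exchangeGraph_of_unused (hF : IsMaxForestPacking G F)
    (h : Relation.ReflTransGen (ForestExchange G) F F') (huv : (unusedGraph G F').Adj u v)
    (i : ι) : (F' i ⊓ exchangeGraph G F).Reachable u v := by
  have hF' := hF.of_reflTransGen h
  obtain ⟨p, hp⟩ := (hF'.reachable_of_unused huv i).exists_isPath
  refine ⟨p.transfer _ fun e he => ?_⟩
  obtain ⟨F'', hex, hunused⟩ := hF'.exists_forestExchange huv hp he
  have hei := p.edges_subset_edgeSet he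
  induction e with | _ a b
  exact ⟨hei, exchangeGraph_adj.2 ⟨F'', h.tail hex, hunused⟩⟩

-- Undoing one exchange, the added edge is replaced by a path supplied by the previous lemma.
lemma reachable_inf_exchangeGraph_of_reflTransGen (hF : IsMaxForestPacking G F)
    (h : Relation.ReflTransGen (ForestExchange G) F F') (i : ι) :
    (F' i ⊓ exchangeGraph G F).Reachable ≤ (F i ⊓ exchangeGraph G F).Reachable := by
  induction h with
  | refl => exact le_rfl
  | @tail F₁ F₂ h₁ hex ih =>
    obtain ⟨-, x, y, hxy, hle⟩ := hex
    refine (reachable_le_reachable_of_adj_le fun a b hab => ?_).trans ih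
    rcases hle i hab.1 with h | h
    · exact Adj.reachable ⟨h, hab.2⟩
    · have hreach := hF.reachable_inf_exchangeGraph_of_unused h₁ hxy i
      rcases ((edge_adj _ _ _ _).1 h).1 with ⟨rfl, rfl⟩ | ⟨rfl, rfl⟩
      · exact hreach
      · exact hreach.symm

lemma reachable_inf_exchangeGraph (hF : IsMaxForestPacking G F) (i : ι) :
    (F i ⊓ exchangeGraph G F).Reachable = (exchangeGraph G F).Reachable := by
  refine le_antisymm (fun _ _ h => h.mono inf_le_right)
    (reachable_le_reachable_of_adj_le fun a b hab => ?_)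
  obtain ⟨F', hF', hunused⟩ := exchangeGraph_adj.1 hab
  exact hF.reachable_inf_exchangeGraph_of_reflTransGen hF' i _ _
    (hF.reachable_inf_exchangeGraph_of_unused hF' hunused i)

end IsMaxForestPacking

end Packings

section Partitions

variable {V W : Type*} {G : SimpleGraph V} {f : V → W}

/-- The edges of `G` between different parts of a partition of the vertices. The partition is given
by the map `f` sending each vertex to its part. -/
def crossingEdges (G : SimpleGraph V) (f : V → W) : Set (Sym2 V) :=
  {e ∈ G.edgeSet | ¬(e.map f).IsDiag}

/-- The edges of `G` with exactly one end in the part `w` of the partition given by `f`. -/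
def cutEdges (G : SimpleGraph V) (f : V → W) (w : W) : Set (Sym2 V) :=
  {e ∈ crossingEdges G f | w ∈ e.map f}

lemma le_encard_cutEdges [Nontrivial W] {k : ℕ} (hG : G.IsEdgeConnected k)
    (hf : Function.Surjective f) (w : W) : k ≤ (cutEdges G f w).encard := by
  by_contra! hlt
  obtain ⟨w', hw'⟩ := exists_ne w
  obtain ⟨a, ha⟩ := hf w
  obtain ⟨b, rfl⟩ := hf w'
  obtain ⟨p⟩ := hG a b hlt
  obtain ⟨d, -, hfst, hsnd⟩ := p.exists_boundary_dart (f ⁻¹' {w}) ha hw'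
  obtain ⟨hadj, hcut⟩ := deleteEdges_adj.1 d.adj
  have hne : f d.fst ≠ f d.snd := fun h => hsnd (h.symm.trans hfst)
  exact hcut ⟨⟨hadj, by simpa using hne⟩, by simp [← Set.mem_singleton_iff.1 hfst]⟩

lemma card_mul_le_two_mul_ncard_crossingEdges [Finite V] [Finite W] [Nontrivial W] {k : ℕ}
    (hG : G.IsEdgeConnected k) (hf : Function.Surjective f) :
    Nat.card W * k ≤ 2 * (crossingEdges G f).ncard := by
  classical
  have := Fintype.ofFinite V
  have := Fintype.ofFinite W
  let E := (crossingEdges G f).toFinset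
  have hpart (w : W) : k ≤ (E.bipartiteAbove (fun w e => w ∈ e.map f) w).card := by
    have hcut : (E.bipartiteAbove (fun w e => w ∈ e.map f) w : Set (Sym2 V)) = cutEdges G f w := by
      ext e
      simp [E, cutEdges, Finset.bipartiteAbove]
    rw [← Nat.cast_le (α := ℕ∞), ← Set.encard_coe_eq_coe_finsetCard, hcut]
    exact le_encard_cutEdges hG hf w
  have hedge (e : Sym2 V) :
      (Finset.univ.bipartiteBelow (fun w (e : Sym2 V) => w ∈ e.map f) e).card ≤ 2 := by
    have hends : Finset.univ.bipartiteBelow (fun w (e : Sym2 V) => w ∈ e.map f) e =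
        (e.map f).toFinset := by
      ext w
      simp [Finset.bipartiteBelow]
    rw [hends, Sym2.card_toFinset]
    split <;> simp
  have hcount := Finset.card_nsmul_le_card_nsmul (s := Finset.univ) (t := E) _
    (fun w _ => hpart w) (fun e _ => hedge e)
  simpa [E, mul_comm, Set.ncard_eq_toFinset_card'] using hcount

end Partitions

section TreePacking

variable {V ι : Type*} {G : SimpleGraph V}

lemma crossingEdges_exchangeGraph_subset [Fintype ι] (G : SimpleGraph V) (F : ι → SimpleGraph V) :
    crossingEdges G (exchangeGraph G F).connectedComponentMk ⊆
      ⋃ i, (F i).edgeSet \ (exchangeGraph G F).edgeSet := by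
  rintro ⟨a, b⟩ ⟨hG, hcross⟩
  have hH : ¬(exchangeGraph G F).Adj a b := fun hab =>
    hcross (ConnectedComponent.sound hab.reachable)
  have hused : ¬(unusedGraph G F).Adj a b := fun hab => hH (exchangeGraph_adj.2 ⟨F, .refl, hab⟩)
  obtain ⟨i, hi⟩ : ∃ i, (F i).Adj a b := by
    by_contra! h
    exact hused (unusedGraph_adj.2 ⟨hG, h⟩)
  exact Set.mem_iUnion.2 ⟨i, hi, hH⟩

/-- The sufficient condition in the **Nash-Williams–Tutte tree packing theorem**. -/
theorem exists_isForestPacking_connected_of_le_crossingEdges [Finite V] [Nonempty V] [Fintype ι]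
    (hG : ∀ s : Setoid V,
      Fintype.card ι * (Nat.card (Quotient s) - 1) ≤ (crossingEdges G (Quotient.mk s)).ncard) :
    ∃ T : ι → SimpleGraph V, IsForestPacking G T ∧ ∀ i, (T i).Connected := by
  obtain ⟨F, hF⟩ := exists_isMaxForestPacking ι G
  let H := exchangeGraph G F
  have hcross : Fintype.card ι * (Nat.card H.ConnectedComponent - 1) ≤
      (crossingEdges G H.connectedComponentMk).ncard := hG H.reachableSetoid
  have hused : (crossingEdges G H.connectedComponentMk).ncard ≤
      ∑ i, ((F i).edgeSet \ H.edgeSet).ncard :=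
    (Set.ncard_le_ncard (crossingEdges_exchangeGraph_subset G F)).trans
      (Set.ncard_iUnion_le_of_fintype _)
  have hforest (i : ι) : ((F i).edgeSet \ H.edgeSet).ncard + Nat.card (F i).ConnectedComponent =
      Nat.card H.ConnectedComponent :=
    ncard_edgeSet_sdiff_add_card_connectedComponent (hF.isAcyclic i)
      (hF.reachable_inf_exchangeGraph i)
  have hpos (i : ι) : 0 < Nat.card (F i).ConnectedComponent := Nat.card_pos
  refine ⟨F, hF.toIsForestPacking, fun i => connected_of_card_connectedComponent_eq_one ?_⟩
  by_contra hi
  have hlt : ∑ i, ((F i).edgeSet \ H.edgeSet).ncard <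
      ∑ _i : ι, (Nat.card H.ConnectedComponent - 1) :=
    Finset.sum_lt_sum (fun j _ => by have := hforest j; have := hpos j; omega)
      ⟨i, Finset.mem_univ i, by have := hforest i; have := hpos i; omega⟩
  rw [Finset.sum_const, Finset.card_univ, smul_eq_mul] at hlt
  exact (hcross.trans hused).not_gt hlt

theorem exists_isForestPacking_connected_of_isEdgeConnected [Finite V] [Nonempty V] [Fintype ι]
    (hG : G.IsEdgeConnected (2 * Fintype.card ι)) :
    ∃ T : ι → SimpleGraph V, IsForestPacking G T ∧ ∀ i, (T i).Connected := by
  refine exists_isForestPacking_connected_of_le_crossingEdges fun s => ?_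
  rcases subsingleton_or_nontrivial (Quotient s) with _ | _
  · have hcard : Nat.card (Quotient s) ≤ 1 := Finite.card_le_one_iff_subsingleton.2 ‹_›
    simp [Nat.sub_eq_zero_of_le hcard]
  · have hcut := card_mul_le_two_mul_ncard_crossingEdges hG (Quotient.mk_surjective (s := s))
    calc Fintype.card ι * (Nat.card (Quotient s) - 1)
        ≤ Fintype.card ι * Nat.card (Quotient s) := Nat.mul_le_mul_left _ (Nat.sub_le _ _)
      _ ≤ (crossingEdges G (Quotient.mk s)).ncard := by linarith

end TreePacking

section Invariants

variable {V : Type*}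

lemma bddAbove_treePacking [Finite V] [Nontrivial V] (G : SimpleGraph V) :
    BddAbove {M | ∃ T : Fin M → SimpleGraph V, (∀ i, T i ≤ G) ∧ (∀ i, (T i).IsTree) ∧
      Pairwise fun i j => Disjoint (T i).edgeSet (T j).edgeSet} := by
  refine ⟨Nat.card (Sym2 V), ?_⟩
  rintro M ⟨T, -, hT, hdisj⟩
  have hne (i : Fin M) : (T i).edgeSet.Nonempty := by
    obtain ⟨v⟩ := (hT i).connected.nonempty
    obtain ⟨w, hw⟩ := (hT i).connected.preconnected.exists_adj_of_nontrivial v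
    exact ⟨s(v, w), hw⟩
  choose e he using hne
  have hinj : Function.Injective e := by
    intro i j hij
    by_contra h
    exact Set.disjoint_left.1 (hdisj h) (he i) (hij ▸ he j)
  simpa using Nat.card_le_card_of_injective e hinj

variable [Fintype V] (G : SimpleGraph V)

lemma isEdgeConnected_edgeConnectivity : G.IsEdgeConnected (edgeConnectivity G) := by
  intro u v S hS
  let S' := (Set.toFinite (S ∩ G.edgeSet)).toFinset
  have hdelete : G.deleteEdges S = G.deleteEdges (S' : Set (Sym2 V)) := by
    rw [deleteEdges_eq_inter_edgeSet, Set.Finite.coe_toFinset]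
  have hcard : S'.card < edgeConnectivity G := by
    rw [← Nat.cast_lt (α := ℕ∞), ← Set.encard_coe_eq_coe_finsetCard]
    exact (Set.encard_le_encard (by simp [S'])).trans_lt hS
  by_contra hr
  exact Nat.notMem_of_lt_sInf hcard
    ⟨S', rfl, by simp [S'], fun hconn => hr (hdelete ▸ hconn.preconnected u v)⟩

/-- No edge set disconnects a one-vertex graph, so `edgeConnectivity` is the infimum of `∅ ⊆ ℕ`,
which is `0` by convention. -/
lemma edgeConnectivity_of_subsingleton [Nonempty V] [Subsingleton V] : edgeConnectivity G = 0 := by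
  refine Nat.sInf_eq_zero.2 (.inr (Set.eq_empty_of_forall_notMem ?_))
  rintro _ ⟨S, -, -, hS⟩
  exact hS ⟨.of_subsingleton⟩

variable {G} in
lemma IsForestPacking.le_treePackingNumber [Nontrivial V] {k : ℕ} {T : Fin k → SimpleGraph V}
    (hT : IsForestPacking G T) (hconn : ∀ i, (T i).Connected) : k ≤ treePackingNumber G :=
  le_csSup (bddAbove_treePacking G) ⟨T, hT.le, fun i => ⟨hconn i, hT.isAcyclic i⟩,
    fun _ _ hij => disjoint_edgeSet.2 (hT.disjoint hij)⟩

end Invariants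

theorem edge_connectivity_half_le_tree_packing
    {V : Type*} [Fintype V] (G : SimpleGraph V) (hG : G.Connected) :
    edgeConnectivity G / 2 ≤ treePackingNumber G := by
  have := hG.nonempty
  rcases subsingleton_or_nontrivial V with _ | _
  · simp [edgeConnectivity_of_subsingleton]
  · have hconn : G.IsEdgeConnected (2 * Fintype.card (Fin (edgeConnectivity G / 2))) := by
      rw [Fintype.card_fin]
      exact fun u v => (isEdgeConnected_edgeConnectivity G u v).anti (Nat.mul_div_le _ 2)
    obtain ⟨T, hT, hTconn⟩ := exists_isForestPacking_connected_of_isEdgeConnected hconn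
    exact hT.le_treePackingNumber hTconn
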